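/- arXiv:1809.02484 — 2 statements merged into one kernel-verified Lean document; each statement's English description precedes it below -/
import Mathlib

section
/- Let k be a field, G a group, and let V and W be representations of G on k-vector spaces. Equip Hom_k(W, V) with the G-action (g·f)(w) := g·(f(g⁻¹·w)) (the conjugation action). Then for every n ≥ 0 there is a k-linear isomorphism Ext^n(W, V) ≅ H^n(G, Hom_k(W, V)), where Ext is taken in the abelian category of k-linear representations of G and H^n denotes group cohomology of the conjugation representation. -/
open CategoryTheory

/-!
If `W` is projective over `k`, both functors in the tensor-hom adjunction `W ⊗ - ⊣ Hom_k(W, -)` on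
`Rep k G` are exact. Hence `W ⊗ -` sends a projective resolution `P` of the trivial representation
`k` to a projective resolution of `W ⊗ k ≅ W`, and `Hom(W ⊗ P, V) ≅ Hom(P, Hom_k(W, V))`. Taking
cohomology gives `Ext^n(W, V) ≅ Ext^n(k, Hom_k(W, V))`, which is `H^n(G, Hom_k(W, V))`.
-/

open MonoidalCategory

noncomputable section

universe u v

section Adjunction

variable {C D : Type*} [Category* C] [Category* D] {F : C ⥤ D} {G : D ⥤ C}

/-- The hom-set bijection of an adjunction with `R`-linear left adjoint, as an `R`-linear
equivalence. -/
def adjunctionHomLinearEquiv (R : Type*) [Semiring R] [Preadditive C] [Preadditive D] [Linear R C]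
    [Linear R D] [F.Additive] [F.Linear R] (adj : F ⊣ G) (X : C) (Y : D) :
    (F.obj X ⟶ Y) ≃ₗ[R] (X ⟶ G.obj Y) :=
  ((adj.homAddEquiv X Y).symm.toLinearEquiv fun r f => by
    simp only [Adjunction.homAddEquiv_symm_apply, Adjunction.homEquiv_counit, F.map_smul,
      Linear.smul_comp]).symm

theorem preservesHomology_of_adjunction_of_preservesMonomorphisms [Abelian C] [Abelian D]
    (adj : F ⊣ G) [F.PreservesZeroMorphisms] [F.PreservesMonomorphisms] :
    F.PreservesHomology :=
  have := adj.leftAdjoint_preservesColimits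
  F.preservesHomology_of_preservesMonos_and_cokernels

end Adjunction

section ExtAdjunction

variable {C D : Type*} [Category.{v} C] [Category.{v} D] [Abelian C] [Abelian D] {F : C ⥤ D}
  {G : D ⥤ C}

/-- The isomorphism of cochain complexes `Hom(F K, Y) ≅ Hom(K, G Y)` induced by an adjunction
`F ⊣ G` with `R`-linear left adjoint. -/
def linearYonedaObjMapIso (R : Type*) [Ring R] [Linear R C] [Linear R D]
    [F.Additive] [F.Linear R] {α : Type*} [AddRightCancelSemigroup α] [One α] (adj : F ⊣ G)
    (K : ChainComplex C α) (Y : D) :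
    ChainComplex.linearYonedaObj ((F.mapHomologicalComplex _).obj K) R Y ≅
      K.linearYonedaObj R (G.obj Y) :=
  HomologicalComplex.Hom.isoOfComponents
    (fun i => (adjunctionHomLinearEquiv R adj (K.X i) Y).toModuleIso) fun i j _ => by
      ext f
      exact (adj.homEquiv_naturality_left (K.d j i) f).symm

/-- The isomorphism `Ext^n(F X, Y) ≅ Ext^n(X, G Y)` induced by an adjunction `F ⊣ G` of exact
functors with `F` linear over `R`. -/
def extIsoOfAdjunction (R : Type*) [Ring R] [Linear R C] [Linear R D] [EnoughProjectives C]
    [EnoughProjectives D] [F.Additive] [F.Linear R] [F.PreservesMonomorphisms]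
    [G.PreservesEpimorphisms] (adj : F ⊣ G) (X : C) (Y : D) (n : ℕ) :
    ((Ext R D n).obj (Opposite.op (F.obj X))).obj Y ≅
      ((Ext R C n).obj (Opposite.op X)).obj (G.obj Y) :=
  have := preservesHomology_of_adjunction_of_preservesMonomorphisms adj
  have := Functor.preservesProjectiveObjects_of_adjunction_of_preservesEpimorphisms adj
  let P := projectiveResolution X
  (F.mapProjectiveResolution P).isoExt n Y ≪≫
    (HomologicalComplex.homologyFunctor _ _ n).mapIso (linearYonedaObjMapIso R adj P.complex Y) ≪≫
    (P.isoExt n (G.obj Y)).symm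

end ExtAdjunction

section Rep

variable {k : Type u} [CommRing k]

instance tensorLeft_preservesMonomorphisms {G : Type v} [Monoid G] (W : Rep.{u} k G)
    [Module.Flat k W] : (tensorLeft W).PreservesMonomorphisms where
  preserves f hf := by
    rw [Rep.mono_iff_injective] at hf ⊢
    exact Module.Flat.lTensor_preserves_injective_linearMap (M := W) f.hom.toLinearMap hf

instance ihom_preservesEpimorphisms {G : Type v} [Group G] (W : Rep.{u} k G)
    [Module.Projective k W] : (ihom W).PreservesEpimorphisms where
  preserves {X Y} f hf := by
    rw [Rep.epi_iff_surjective] at hf ⊢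
    intro (g : W →ₗ[k] Y)
    exact Module.projective_lifting_property f.hom.toLinearMap g hf

variable {G : Type u} [Group G]

/-- The isomorphism `Ext^n(W, V) ≅ H^n(G, Hom_k(W, V))` for a representation `W` whose underlying
`k`-module is projective. -/
def extIsoGroupCohomologyLinHom (V W : Rep.{u} k G) [Module.Projective k W] (n : ℕ) :
    ((Ext k (Rep k G) n).obj (Opposite.op W)).obj V ≅
      groupCohomology (Rep.of (Representation.linHom W.ρ V.ρ)) n :=
  ((Ext k (Rep k G) n).mapIso (ρ_ W).op).app V ≪≫
    extIsoOfAdjunction k (ihom.adjunction W) (𝟙_ (Rep k G)) V n ≪≫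
    (groupCohomologyIsoExt (Rep.of (Representation.linHom W.ρ V.ρ)) n).symm

theorem stmt7_general (V W : Rep.{u} k G) [Module.Projective k W] (n : ℕ) :
    Nonempty
      ((((Ext k (Rep k G) n).obj (Opposite.op W)).obj V) ≃ₗ[k]
        (groupCohomology (Rep.of (Representation.linHom W.ρ V.ρ)) n)) :=
  ⟨(extIsoGroupCohomologyLinHom V W n).toLinearEquiv⟩

end Rep

end

/-- For representations `V, W` of a group `G` over a field `k`, and every
`n ≥ 0`, there is a `k`-linear isomorphism `Ext^n(W, V) ≅ H^n(G, Hom_k(W, V))`, where `Ext`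
is taken in the abelian category `Rep k G` and the coefficients carry the conjugation action
`(g·f)(w) = g·f(g⁻¹·w)`. -/
theorem stmt7 {k : Type} [Field k] {G : Type} [Group G]
    (V W : Rep k G) (n : ℕ) :
    Nonempty
      ((((Ext k (Rep k G) n).obj (Opposite.op W)).obj V) ≃ₗ[k]
        (groupCohomology (Rep.of (Representation.linHom W.ρ V.ρ)) n)) :=
  stmt7_general V W n
end

section
/- Let r ≥ 1, s ≥ 0, and let γ : {0, 1, …, s} → {1, …, r} be any function (a path of length s in the complete directed graph on r vertices). Then there exist an integer t with t ≥ ⌊s/r⌋ and indices a₁ < b₁ ≤ a₂ < b₂ ≤ ⋯ ≤ a_t < b_t with 0 ≤ a₁ and b_t ≤ s, such that for each 1 ≤ k ≤ t: b_k − a_k ≤ r, γ(a_k) = γ(b_k), and γ is injective on {a_k, a_k + 1, …, b_k − 1}. In other words, every path of length s on r vertices contains at least ⌊s/r⌋ pairwise disjoint consecutive subpaths, each of which is a simple closed path of length at most r. -/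
/-!
Cut the path into `⌊s/r⌋` consecutive blocks of `r` steps. A block visits `r + 1` positions but at
most `r` vertices, so some vertex repeats inside it; stopping at the first position that repeats an
earlier vertex of the block leaves only distinct vertices before it, so the closed path it ends is
simple.
-/

/-- The part of the path `γ` between the positions `a < b` is a simple closed path: its endpoints
coincide, and its vertices are otherwise pairwise distinct. -/
structure IsSimpleClosedSubpath {ι V : Type*} [Preorder ι] (γ : ι → V) (a b : ι) : Prop where
  lt : a < b
  map_eq : γ a = γ b
  injOn : Set.InjOn γ (Set.Ico a b)

theorem exists_isSimpleClosedSubpath_of_not_injOn {ι V : Type*} [LinearOrder ι] [WellFoundedLT ι]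
    {γ : ι → V} {m n : ι} (h : ¬ Set.InjOn γ (Set.Icc m n)) :
    ∃ a b, m ≤ a ∧ b ≤ n ∧ IsSimpleClosedSubpath γ a b := by
  obtain ⟨b, hbn, hb⟩ :=
    exists_minimal_le_of_wellFoundedLT (fun b => ¬ Set.InjOn γ (Set.Icc m b)) n h
  have hmb : m ≤ b := Set.nonempty_Icc.mp <| Set.nonempty_iff_ne_empty.mpr fun hempty =>
    hb.prop (hempty ▸ Set.injOn_empty γ)
  have hinj : Set.InjOn γ (Set.Ico m b) := fun x hx y hy =>
    not_not.mp (hb.not_prop_of_lt (max_lt hx.2 hy.2))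
      ⟨hx.1, le_max_left x y⟩ ⟨hy.1, le_max_right x y⟩
  obtain ⟨a, ⟨hma, hab⟩, hγ⟩ : γ b ∈ γ '' Set.Ico m b := by
    by_contra hfresh
    have hinsert := (Set.injOn_insert Set.right_notMem_Ico).mpr ⟨hinj, hfresh⟩
    exact hb.prop (Set.Ico_insert_right hmb ▸ hinsert)
  exact ⟨a, b, hma, hbn, hab, hγ, hinj.mono (Set.Ico_subset_Ico_left hma)⟩

theorem exists_isSimpleClosedSubpath_of_ncard_image_le {V : Type*} {γ : ℕ → V} {m r : ℕ}
    (h : (γ '' Set.Icc m (m + r)).ncard ≤ r) :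
    ∃ a b, m ≤ a ∧ b ≤ m + r ∧ IsSimpleClosedSubpath γ a b := by
  refine exists_isSimpleClosedSubpath_of_not_injOn fun hinj => ?_
  rw [hinj.ncard_image, Set.ncard_Icc_nat] at h
  omega

theorem stmt13_general {V : Type*} (r s : ℕ) (γ : ℕ → V) (hγ : (γ '' Set.Iic s).ncard ≤ r) :
    ∃ a b : Fin (s / r) → ℕ,
      (∀ k, IsSimpleClosedSubpath γ (a k) (b k)) ∧
      (∀ k l, k < l → b k ≤ a l) ∧
      (∀ k, b k ≤ s) ∧
      (∀ k, b k - a k ≤ r) := by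
  have block_end_le (k : Fin (s / r)) : k * r + r ≤ s := by
    rw [← Nat.succ_mul]
    exact Nat.mul_le_of_le_div r _ s k.isLt
  have block_visits_le (k : Fin (s / r)) : (γ '' Set.Icc (k * r) (k * r + r)).ncard ≤ r := by
    refine (Set.ncard_le_ncard (Set.image_mono ?_) ((Set.finite_Iic s).image γ)).trans hγ
    exact fun x hx => hx.2.trans (block_end_le k)
  choose a b ha hb hab using fun k =>
    exists_isSimpleClosedSubpath_of_ncard_image_le (block_visits_le k)
  refine ⟨a, b, hab, fun k l hkl => ?_, fun k => (hb k).trans (block_end_le k),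
    fun k => tsub_le_iff_left.mpr ((hb k).trans (Nat.add_le_add_right (ha k) r))⟩
  calc b k ≤ k * r + r := hb k
    _ = (k + 1) * r := (Nat.succ_mul k r).symm
    _ ≤ l * r := Nat.mul_le_mul_right r hkl
    _ ≤ a l := ha l

/-- Every path `γ : {0,…,s} → {1,…,r}` in the complete directed graph on
`r` vertices contains at least `⌊s/r⌋` pairwise disjoint consecutive subpaths, each a simple
closed path of length at most `r`: there are `t ≥ ⌊s/r⌋` and indices
`a₁ < b₁ ≤ a₂ < b₂ ≤ ⋯ ≤ a_t < b_t ≤ s` with `b_k − a_k ≤ r`, `γ(a_k) = γ(b_k)`, and `γ`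
injective on `{a_k, …, b_k − 1}` for each `k`. -/
theorem stmt13 (r s : ℕ) (hr : 1 ≤ r) (γ : ℕ → Fin r) :
    ∃ (t : ℕ) (a b : Fin t → ℕ),
      s / r ≤ t ∧
      (∀ k : Fin t, a k < b k) ∧
      (∀ k l : Fin t, k < l → b k ≤ a l) ∧
      (∀ k : Fin t, b k ≤ s) ∧
      (∀ k : Fin t, b k - a k ≤ r) ∧
      (∀ k : Fin t, γ (a k) = γ (b k)) ∧
      (∀ (k : Fin t) (x y : ℕ), a k ≤ x → x < b k → a k ≤ y → y < b k →
        γ x = γ y → x = y) := by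
  obtain ⟨a, b, hab, hdisj, hs, hlen⟩ :=
    stmt13_general r s γ ((Set.ncard_le_card _).trans (Nat.card_fin r).le)
  exact ⟨s / r, a, b, le_rfl, fun k => (hab k).lt, hdisj, hs, hlen, fun k => (hab k).map_eq,
    fun k _ _ hx hxb hy hyb hxy => (hab k).injOn ⟨hx, hxb⟩ ⟨hy, hyb⟩ hxy⟩
end
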